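/- Let n ≥ 2 be an integer and 0 < a < 1/√n, and set C(a) = a^{2/n}(1 − a²)^{1 − 1/n}. Let h be a twice-differentiable real-valued function on an open interval I ⊆ ℝ containing 0, with 0 < h < 1 on I, satisfying the Otsuki equation n·h·(1 − h²)·h″ + (h′)² + (1 − h²)·(n·h² − 1) = 0 on I together with the initial conditions h(0) = a and h′(0) = 0. Then for all θ ∈ I: h′(θ)² = 1 − h(θ)² − C(a)·((1 − h(θ)²)/h(θ)²)^{1/n}. -/

import Mathlib

open Real

/-!
The Otsuki equation has the integrating factor `-2h' (h² / (1 - h²))^(1/n) / (n h (1 - h²))`: its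
product with the left-hand side is the derivative of `(1 - h² - h'²) (h² / (1 - h²))^(1/n)`. This
quantity is therefore constant along a solution. Its value at a point with `h = a`, `h' = 0` is
`C(a)`, and solving for `h'²` gives the identity.
-/

/-- The first integral of the Otsuki equation, as a function on the phase plane: `x` stands for `h`
and `y` for `h'`. It is meaningful for `0 < x² < 1` and `n ≠ 0`. -/
noncomputable def otsukiFirstIntegral (n x y : ℝ) : ℝ :=
  (1 - x ^ 2 - y ^ 2) * (x ^ 2 / (1 - x ^ 2)) ^ (1 / n)

theorem otsukiFirstIntegral_zero_right (n : ℝ) {a : ℝ} (ha₀ : 0 ≤ a) (ha₁ : a < 1) :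
    otsukiFirstIntegral n a 0 = a ^ (2 / n) * (1 - a ^ 2) ^ (1 - 1 / n) := by
  have hs : 0 < 1 - a ^ 2 := sub_pos.2 (pow_lt_one₀ ha₀ ha₁ two_ne_zero)
  have hpow : (a ^ 2) ^ (1 / n) = a ^ (2 / n) := by
    rw [← rpow_natCast_mul ha₀, Nat.cast_ofNat, mul_one_div]
  rw [otsukiFirstIntegral, div_rpow (sq_nonneg a) hs.le, hpow, rpow_sub hs, rpow_one]
  ring

theorem sq_eq_sub_otsukiFirstIntegral_mul (n : ℝ) {x : ℝ} (hx₀ : x ≠ 0) (hx₁ : x ^ 2 < 1) (y : ℝ) :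
    y ^ 2 = 1 - x ^ 2 - otsukiFirstIntegral n x y * ((1 - x ^ 2) / x ^ 2) ^ (1 / n) := by
  have hs : 0 < 1 - x ^ 2 := sub_pos.2 hx₁
  have hcancel : (x ^ 2 / (1 - x ^ 2)) ^ (1 / n) * ((1 - x ^ 2) / x ^ 2) ^ (1 / n) = 1 := by
    rw [← mul_rpow (by positivity) (by positivity), div_mul_div_cancel₀ hs.ne',
      div_self (pow_ne_zero 2 hx₀), one_rpow]
  rw [otsukiFirstIntegral, mul_assoc, hcancel]
  ring

section Curve

variable {n : ℝ} {h h' : ℝ → ℝ}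

theorem hasDerivAt_sq_div_one_sub_sq {k θ : ℝ} (hd : HasDerivAt h k θ) (hh1 : h θ ^ 2 ≠ 1) :
    HasDerivAt (fun t => h t ^ 2 / (1 - h t ^ 2)) (2 * h θ * k / (1 - h θ ^ 2) ^ 2) θ := by
  have hsq : HasDerivAt (fun t => h t ^ 2) (2 * h θ * k) θ := by simpa using hd.fun_pow 2
  refine (hsq.fun_div (hsq.const_sub 1) (sub_ne_zero.2 hh1.symm)).congr_deriv ?_
  ring

theorem hasDerivAt_otsukiFirstIntegral (hn : n ≠ 0) {k θ : ℝ} (hh0 : h θ ≠ 0) (hh1 : h θ ^ 2 ≠ 1)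
    (hd1 : HasDerivAt h (h' θ) θ) (hd2 : HasDerivAt h' k θ) :
    HasDerivAt (fun t => otsukiFirstIntegral n (h t) (h' t))
      (-(2 * h' θ * (h θ ^ 2 / (1 - h θ ^ 2)) ^ (1 / n) / (n * h θ * (1 - h θ ^ 2))) *
        (n * h θ * (1 - h θ ^ 2) * k + h' θ ^ 2 + (1 - h θ ^ 2) * (n * h θ ^ 2 - 1))) θ := by
  have hs : 1 - h θ ^ 2 ≠ 0 := sub_ne_zero.2 hh1.symm
  have hQ : h θ ^ 2 / (1 - h θ ^ 2) ≠ 0 := div_ne_zero (pow_ne_zero 2 hh0) hs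
  have hU : HasDerivAt (fun t => 1 - h t ^ 2 - h' t ^ 2) (-(2 * h θ * h' θ) - 2 * h' θ * k) θ := by
    simpa using ((hd1.fun_pow 2).const_sub 1).fun_sub (hd2.fun_pow 2)
  have hP := (hasDerivAt_sq_div_one_sub_sq hd1 hh1).rpow_const (p := 1 / n) (Or.inl hQ)
  refine (hU.fun_mul hP).congr_deriv ?_
  rw [rpow_sub_one hQ]
  field_simp
  ring

theorem otsukiFirstIntegral_eq_of_otsuki (hn : n ≠ 0) {I : Set ℝ} (hI : IsOpen I)
    (hI' : IsPreconnected I) {h'' : ℝ → ℝ} (hh0 : ∀ θ ∈ I, h θ ≠ 0) (hh1 : ∀ θ ∈ I, h θ ^ 2 ≠ 1)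
    (hd1 : ∀ θ ∈ I, HasDerivAt h (h' θ) θ) (hd2 : ∀ θ ∈ I, HasDerivAt h' (h'' θ) θ)
    (hode : ∀ θ ∈ I,
      n * h θ * (1 - h θ ^ 2) * h'' θ + h' θ ^ 2 + (1 - h θ ^ 2) * (n * h θ ^ 2 - 1) = 0)
    {θ θ₀ : ℝ} (hθ : θ ∈ I) (hθ₀ : θ₀ ∈ I) :
    otsukiFirstIntegral n (h θ) (h' θ) = otsukiFirstIntegral n (h θ₀) (h' θ₀) := by
  have hderiv : ∀ t ∈ I, HasDerivAt (fun t => otsukiFirstIntegral n (h t) (h' t)) 0 t :=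
    fun t ht => (hasDerivAt_otsukiFirstIntegral hn (hh0 t ht) (hh1 t ht) (hd1 t ht)
      (hd2 t ht)).congr_deriv (by rw [hode t ht, mul_zero])
  exact hI.is_const_of_deriv_eq_zero hI'
    (fun t ht => (hderiv t ht).differentiableAt.differentiableWithinAt)
    (fun t ht => (hderiv t ht).deriv) hθ hθ₀

theorem otsuki_first_order_identity_general (hn : n ≠ 0) {I : Set ℝ} (hI : IsOpen I)
    (hI' : IsPreconnected I) {h'' : ℝ → ℝ} (hh0 : ∀ θ ∈ I, h θ ≠ 0) (hh1 : ∀ θ ∈ I, h θ ^ 2 < 1)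
    (hd1 : ∀ θ ∈ I, HasDerivAt h (h' θ) θ) (hd2 : ∀ θ ∈ I, HasDerivAt h' (h'' θ) θ)
    (hode : ∀ θ ∈ I,
      n * h θ * (1 - h θ ^ 2) * h'' θ + h' θ ^ 2 + (1 - h θ ^ 2) * (n * h θ ^ 2 - 1) = 0)
    {θ₀ : ℝ} (hθ₀ : θ₀ ∈ I) :
    ∀ θ ∈ I, h' θ ^ 2 = 1 - h θ ^ 2 -
      otsukiFirstIntegral n (h θ₀) (h' θ₀) * ((1 - h θ ^ 2) / h θ ^ 2) ^ (1 / n) := by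
  intro θ hθ
  rw [← otsukiFirstIntegral_eq_of_otsuki hn hI hI' hh0 (fun t ht => (hh1 t ht).ne) hd1 hd2 hode
    hθ hθ₀]
  exact sq_eq_sub_otsukiFirstIntegral_mul n (hh0 θ hθ) (hh1 θ hθ) (h' θ)

end Curve

/-- Let `n ≥ 2`, `0 < a < 1/√n` and `C(a) = a^(2/n)(1 − a²)^(1 − 1/n)`.
A twice-differentiable solution `h` of the Otsuki equation on an open interval
containing `0`, with `0 < h < 1`, `h(0) = a` and `h′(0) = 0`, satisfies the
first-order identity `h′² = 1 − h² − C(a)((1 − h²)/h²)^(1/n)`. -/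
theorem otsuki_first_order_identity
    (n : ℕ) (hn : 2 ≤ n) (a : ℝ) (ha : 0 < a) (ha' : a < 1 / Real.sqrt n)
    (I : Set ℝ) (hI : IsOpen I) (hI' : I.OrdConnected) (h0I : (0 : ℝ) ∈ I)
    (h h' h'' : ℝ → ℝ)
    (hh_pos : ∀ θ ∈ I, 0 < h θ) (hh_lt : ∀ θ ∈ I, h θ < 1)
    (hd1 : ∀ θ ∈ I, HasDerivAt h (h' θ) θ)
    (hd2 : ∀ θ ∈ I, HasDerivAt h' (h'' θ) θ)
    (hode : ∀ θ ∈ I,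
      n * h θ * (1 - h θ ^ 2) * h'' θ + (h' θ) ^ 2 +
        (1 - h θ ^ 2) * (n * h θ ^ 2 - 1) = 0)
    (hinit : h 0 = a) (hinit' : h' 0 = 0) :
    ∀ θ ∈ I,
      (h' θ) ^ 2 = 1 - h θ ^ 2 -
        a ^ ((2 : ℝ) / n) * (1 - a ^ 2) ^ (1 - 1 / (n : ℝ)) *
          ((1 - h θ ^ 2) / h θ ^ 2) ^ (1 / (n : ℝ)) := by
  have hlt : ∀ θ ∈ I, h θ ^ 2 < 1 := fun θ hθ =>
    pow_lt_one₀ (hh_pos θ hθ).le (hh_lt θ hθ) two_ne_zero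
  simpa only [hinit, hinit', otsukiFirstIntegral_zero_right n ha.le (hinit ▸ hh_lt 0 h0I)] using
    otsuki_first_order_identity_general (Nat.cast_ne_zero.2 (by lia)) hI hI'.isPreconnected
      (fun θ hθ => (hh_pos θ hθ).ne') hlt hd1 hd2 hode h0I
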